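/- arXiv:2008.06401 — 2 statements merged into one kernel-verified Lean document; each statement's English description precedes it below -/
import Mathlib

section
/- For every non-negative integer k and every non-negative integer n, the number of (25k+3)-colour partitions of 25n+22 is divisible by 5; that is, p_{25k+3}(25n+22) ≡ 0 (mod 5). -/
/-- `colouredPartitions r n` is the number of `r`-colour partitions of `n`:
multisets of pairs `(m, c)` with `m` a positive integer part and `c` one of `r`
colours, whose parts (first components, with multiplicity) sum to `n`.  Such a
multiset is encoded by its multiplicity function `f : ℕ+ × Fin r →₀ ℕ`. -/
noncomputable def colouredPartitions (r n : ℕ) : ℕ :=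
  Nat.card {f : ℕ+ × Fin r →₀ ℕ // (f.sum fun x m => (x.1 : ℕ) * m) = n}

/-!
Let `F = ∏ (1 - q ^ m)`, so that `F ^ r` is inverse to the generating function `P_r` of the
`r`-colour partitions. Modulo `5` we have `f ^ 5 = f(q ^ 5)`, hence
`P_{25k+3} = F ^ 22 * P_{k+1} ^ 25 = F ^ 2 * (F ^ 4)(q ^ 5) * P_{k+1}(q ^ 25)`, and two successive
extractions of exponents, first those `≡ 2` and then those `≡ 4` modulo `5`, reduce the claim to
the corresponding parts of `F ^ 2` and of `F ^ 4`.

By the pentagonal number theorem the exponents in `F` are `0`, `1` or `2` modulo `5`, so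
`F = a₀(q ^ 5) + q a₁(q ^ 5) + q ^ 2 a₂(q ^ 5)`. Over any commutative ring `a₁ = -F(q ^ 5)` and
`a₀ a₂ = -a₁ ^ 2`. The part `2` of `F ^ 2` is therefore `a₁ ^ 2 + 2 a₀ a₂ = -F(q ^ 5) ^ 2`, which
is a series in `q ^ 5` and can be pulled out of the second extraction, and the part `4` of `F ^ 4`
is `a₁ ^ 4 + 12 a₀ a₁ ^ 2 a₂ + 6 a₀ ^ 2 a₂ ^ 2 = -5 a₁ ^ 4`.
-/

open PowerSeries Finset

section GeneratingFunction

variable (R : Type*) [CommRing R]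

/-- The series `∑ X ^ (w * k) = 1 / (1 - X ^ w)`, counting the multisets made of one part `w`. For
`w = 0` it is the junk value `1`. -/
noncomputable def geometricSeries (w : ℕ) : R⟦X⟧ := mk fun n => if w ∣ n then 1 else 0

variable {R}

lemma geometricSeries_mul_one_sub_X_pow {w : ℕ} (hw : w ≠ 0) :
    geometricSeries R w * (1 - X ^ w) = 1 := by
  have h_expand : geometricSeries R w = expand w hw (mk 1) := by
    ext n
    simp [geometricSeries, coeff_expand]
  simpa [h_expand] using congrArg (expand w hw) (mk_one_mul_one_sub_eq_one R)

lemma smul_mem_finsuppAntidiag_iff {ι : Type*} [DecidableEq ι] {w : ι → ℕ}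
    (hw : ∀ i, w i ≠ 0) (s : Finset ι) (n : ℕ) (f : ι →₀ ℕ) :
    w • f ∈ finsuppAntidiag s n ↔ (f.sum fun i m => w i * m) = n ∧ f.support ⊆ s := by
  have h_support : (w • f).support = f.support := by
    ext i
    simp [hw i]
  rw [mem_finsuppAntidiag', h_support, Finsupp.sum, Finsupp.sum, h_support]
  rfl

lemma exists_smul_eq_of_forall_dvd {ι : Type*} {w : ι → ℕ} {l : ι →₀ ℕ} (hl : ∀ i, w i ∣ l i) :
    ∃ f : ι →₀ ℕ, w • f = l := by
  refine ⟨Finsupp.onFinset l.support (fun i => l i / w i) fun i hi => ?_, ?_⟩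
  · rw [Finsupp.mem_support_iff]
    contrapose! hi
    simp [hi]
  · ext i
    exact Nat.mul_div_cancel' (hl i)

lemma image_smul_setOf_sum_mul_eq {ι : Type*} [DecidableEq ι] {w : ι → ℕ} (hw : ∀ i, w i ≠ 0)
    (s : Finset ι) (n : ℕ) :
    (w • ·) '' {f : ι →₀ ℕ | (f.sum fun i m => w i * m) = n ∧ f.support ⊆ s} =
      {l | l ∈ finsuppAntidiag s n ∧ ∀ i ∈ s, w i ∣ l i} := by
  ext l
  simp only [← smul_mem_finsuppAntidiag_iff hw, Set.mem_image, Set.mem_ofPred_eq]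
  constructor
  · rintro ⟨f, hf, rfl⟩
    exact ⟨hf, fun i _ => Dvd.intro _ rfl⟩
  · rintro ⟨hl, h_dvd⟩
    have h_dvd' (i : ι) : w i ∣ l i := by
      by_cases hi : i ∈ l.support
      · exact h_dvd i ((mem_finsuppAntidiag.1 hl).2 hi)
      · simp [Finsupp.notMem_support_iff.1 hi]
    obtain ⟨f, rfl⟩ := exists_smul_eq_of_forall_dvd h_dvd'
    exact ⟨f, hl, rfl⟩

lemma coeff_prod_geometricSeries {ι : Type*} {w : ι → ℕ} (hw : ∀ i, w i ≠ 0) (s : Finset ι)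
    (n : ℕ) : coeff n (∏ i ∈ s, geometricSeries R (w i)) =
      {f : ι →₀ ℕ | (f.sum fun i m => w i * m) = n ∧ f.support ⊆ s}.ncard := by
  classical
  have h_coeff (l : ι →₀ ℕ) : ∏ i ∈ s, coeff (l i) (geometricSeries R (w i)) =
      if ∀ i ∈ s, w i ∣ l i then 1 else 0 := by
    simp only [geometricSeries, coeff_mk, prod_ite_zero, prod_const_one]
  have h_inj : Function.Injective fun f : ι →₀ ℕ => w • f := fun f g h =>
    Finsupp.ext fun i => mul_left_cancel₀ (hw i) (DFunLike.congr_fun h i)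
  rw [coeff_prod, sum_congr rfl fun l _ => h_coeff l, sum_boole, ← Set.ncard_coe_finset,
    coe_filter, ← image_smul_setOf_sum_mul_eq hw, Set.ncard_image_of_injective _ h_inj]

lemma coeff_prod_geometricSeries_pow {r n : ℕ} {s : Finset ℕ+} (hs : ∀ m : ℕ+, m ≤ n → m ∈ s) :
    coeff n ((∏ m ∈ s, geometricSeries R m) ^ r) = (colouredPartitions r n : R) := by
  have h_prod : (∏ m ∈ s, geometricSeries R m) ^ r =
      ∏ x ∈ s ×ˢ (univ : Finset (Fin r)), geometricSeries R x.1 := by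
    simp [prod_product, prod_pow]
  have h_support (f : ℕ+ × Fin r →₀ ℕ) (hf : (f.sum fun x m => (x.1 : ℕ) * m) = n) :
      f.support ⊆ s ×ˢ univ := by
    intro x hx
    have h_le : (x.1 : ℕ) ≤ n := calc
      (x.1 : ℕ) ≤ x.1 * f x :=
        Nat.le_mul_of_pos_right _ (Nat.pos_of_ne_zero (Finsupp.mem_support_iff.1 hx))
      _ ≤ f.sum fun x m => (x.1 : ℕ) * m :=
        single_le_sum (f := fun x => (x.1 : ℕ) * f x) (fun _ _ => Nat.zero_le _) hx
      _ = n := hf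
    simpa using hs x.1 h_le
  rw [h_prod, coeff_prod_geometricSeries (w := fun x : ℕ+ × Fin r => (x.1 : ℕ))
    (fun x => x.1.ne_zero), colouredPartitions, ← Set.coe_ofPred, Nat.card_coe_set_eq]
  congr 2
  ext f
  exact and_iff_left_of_imp (h_support f)

open scoped PowerSeries.WithPiTopology in
variable (R) in
lemma mk_colouredPartitions_mul_pentagonalSeries_pow (r : ℕ) :
    (mk fun n => (colouredPartitions r n : R)) * pentagonalSeries R ^ r = 1 := by
  let : TopologicalSpace R := ⊥
  have : DiscreteTopology R := ⟨rfl⟩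
  have h_euler : HasProd (fun m : ℕ+ => (1 - X ^ (m : ℕ) : R⟦X⟧)) (pentagonalSeries R) :=
    (hasProd_pnat_iff_hasProd_succ (f := fun m => (1 - X ^ m : R⟦X⟧))).2
      (WithPiTopology.hasProd_one_sub_X_pow R)
  have h_partitions : Filter.Tendsto (fun s : Finset ℕ+ => (∏ m ∈ s, geometricSeries R m) ^ r)
      Filter.atTop (nhds (mk fun n => (colouredPartitions r n : R))) := by
    rw [WithPiTopology.tendsto_iff_coeff_tendsto]
    intro n
    rw [coeff_mk]
    refine tendsto_atTop_of_eventually_const (i₀ := Icc 1 n.succPNat) fun s hs => ?_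
    refine coeff_prod_geometricSeries_pow fun m hm => hs (mem_Icc.2 ⟨one_le, ?_⟩)
    exact PNat.coe_le_coe _ _ |>.1 (hm.trans n.le_succ)
  have h_inverse (s : Finset ℕ+) :
      (∏ m ∈ s, geometricSeries R m) ^ r * (∏ m ∈ s, (1 - X ^ (m : ℕ))) ^ r = 1 := by
    rw [← mul_pow, ← prod_mul_distrib,
      prod_eq_one fun m _ => geometricSeries_mul_one_sub_X_pow m.ne_zero, one_pow]
  have h_limit := h_partitions.mul (Filter.Tendsto.pow h_euler r)
  simp only [h_inverse] at h_limit
  exact tendsto_nhds_unique h_limit tendsto_const_nhds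

end GeneratingFunction

section Dissection

variable {R : Type*} [CommRing R] {p : ℕ}

/-- The `r`-th component `∑ fₚₙ₊ᵣ X ^ n` of the `p`-dissection of `f = ∑ fₙ X ^ n`, whose
components reassemble to `f = ∑_{r < p} X ^ r * fᵣ(X ^ p)`. -/
noncomputable def dissectionPart (p r : ℕ) : R⟦X⟧ →ₗ[R] R⟦X⟧ where
  toFun f := mk fun n => coeff (p * n + r) f
  map_add' f g := by ext; simp
  map_smul' a f := by ext; simp

@[simp]
lemma coeff_dissectionPart (p r n : ℕ) (f : R⟦X⟧) :
    coeff n (dissectionPart p r f) = coeff (p * n + r) f := by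
  simp [dissectionPart]

lemma dissectionPart_X_pow_mul_expand (hp : p ≠ 0) {i r : ℕ} (hr : r < p) (hi : i < p + r)
    (g : R⟦X⟧) :
    dissectionPart p r (X ^ i * expand p hp g) = if i = r then g else 0 := by
  ext n
  rw [coeff_dissectionPart, coeff_X_pow_mul']
  split_ifs with h_le h_eq h_eq
  · rw [h_eq, Nat.add_sub_cancel, coeff_expand_mul]
  · refine coeff_expand_of_not_dvd p hp g fun ⟨k, hk⟩ => h_eq ?_
    have h_mod : i ≡ r [MOD p] := by
      simpa [Nat.ModEq] using (congrArg (· % p) ((Nat.sub_eq_iff_eq_add h_le).1 hk)).symm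
    exact h_mod.eq_of_abs_lt (by grind)
  · omega
  · simp

lemma sum_X_pow_mul_expand_dissectionPart (hp : p ≠ 0) (f : R⟦X⟧) :
    ∑ i ∈ range p, X ^ i * expand p hp (dissectionPart p i f) = f := by
  ext n
  have h_lt : n % p < p := Nat.mod_lt n (Nat.pos_of_ne_zero hp)
  have h_part (i : ℕ) (hi : i ∈ range p) :
      dissectionPart p (n % p) (X ^ i * expand p hp (dissectionPart p i f)) =
        if i = n % p then dissectionPart p i f else 0 :=
    dissectionPart_X_pow_mul_expand hp h_lt (by grind) _
  rw [← Nat.div_add_mod n p, ← coeff_dissectionPart, ← coeff_dissectionPart, map_sum,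
    sum_congr rfl h_part, sum_ite_eq', if_pos (mem_range.2 h_lt)]

lemma X_pow_mul_expand_dissectionPart_eq_self (hp : p ≠ 0) {r : ℕ} (hr : r < p) {f : R⟦X⟧}
    (hf : ∀ n, n % p ≠ r → coeff n f = 0) :
    X ^ r * expand p hp (dissectionPart p r f) = f := by
  conv_rhs => rw [← sum_X_pow_mul_expand_dissectionPart hp f]
  symm
  refine sum_eq_single_of_mem r (mem_range.2 hr) fun i hi hir => ?_
  have h_zero : dissectionPart p i f = 0 := by
    ext n
    rw [coeff_dissectionPart]
    exact hf _ (by simpa [Nat.mod_eq_of_lt (mem_range.1 hi)])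
  rw [h_zero, map_zero, mul_zero]

lemma dissectionPart_mul_expand (hp : p ≠ 0) {r : ℕ} (hr : r < p) (f g : R⟦X⟧) :
    dissectionPart p r (f * expand p hp g) = dissectionPart p r f * g := by
  have h_split : f * expand p hp g =
      ∑ i ∈ range p, X ^ i * expand p hp (dissectionPart p i f * g) := by
    conv_lhs => rw [← sum_X_pow_mul_expand_dissectionPart hp f]
    simp only [sum_mul, map_mul, mul_assoc]
  have h_part (i : ℕ) (hi : i ∈ range p) :
      dissectionPart p r (X ^ i * expand p hp (dissectionPart p i f * g)) =
        if i = r then dissectionPart p i f * g else 0 :=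
    dissectionPart_X_pow_mul_expand hp hr (by grind) _
  rw [h_split, map_sum, sum_congr rfl h_part, sum_ite_eq', if_pos (mem_range.2 hr)]

lemma dissectionPart_trinomial_sq (hp : p ≠ 0) (hp' : 3 ≤ p) (a₀ a₁ a₂ : R⟦X⟧) :
    dissectionPart p 2 ((expand p hp a₀ + X * expand p hp a₁ + X ^ 2 * expand p hp a₂) ^ 2) =
      a₁ ^ 2 + 2 * a₀ * a₂ := by
  set E := expand (R := R) p hp
  have h_part (i : ℕ) (hi : i ≤ 4) (g : R⟦X⟧) :
      dissectionPart p 2 (X ^ i * E g) = if i = 2 then g else 0 :=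
    dissectionPart_X_pow_mul_expand hp (by lia) (by lia) g
  have h_sq : (E a₀ + X * E a₁ + X ^ 2 * E a₂) ^ 2 =
      X ^ 0 * E (a₀ ^ 2) + X ^ 1 * E (2 * a₀ * a₁) + X ^ 2 * E (a₁ ^ 2 + 2 * a₀ * a₂)
        + X ^ 3 * E (2 * a₁ * a₂) + X ^ 4 * E (a₂ ^ 2) := by
    simp only [map_add, map_mul, map_pow, map_ofNat]
    ring
  rw [h_sq]
  simp_rw [map_add (dissectionPart p 2)]
  simp (disch := decide) only [h_part]
  simp

lemma dissectionPart_trinomial_pow_four (hp : p ≠ 0) (hp' : 5 ≤ p) (a₀ a₁ a₂ : R⟦X⟧) :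
    dissectionPart p 4 ((expand p hp a₀ + X * expand p hp a₁ + X ^ 2 * expand p hp a₂) ^ 4) =
      a₁ ^ 4 + 12 * a₀ * a₁ ^ 2 * a₂ + 6 * a₀ ^ 2 * a₂ ^ 2 := by
  set E := expand (R := R) p hp
  have h_part (i : ℕ) (hi : i ≤ 8) (g : R⟦X⟧) :
      dissectionPart p 4 (X ^ i * E g) = if i = 4 then g else 0 :=
    dissectionPart_X_pow_mul_expand hp (by lia) (by lia) g
  have h_pow : (E a₀ + X * E a₁ + X ^ 2 * E a₂) ^ 4 =
      X ^ 0 * E (a₀ ^ 4) + X ^ 1 * E (4 * a₀ ^ 3 * a₁)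
        + X ^ 2 * E (6 * a₀ ^ 2 * a₁ ^ 2 + 4 * a₀ ^ 3 * a₂)
        + X ^ 3 * E (4 * a₀ * a₁ ^ 3 + 12 * a₀ ^ 2 * a₁ * a₂)
        + X ^ 4 * E (a₁ ^ 4 + 12 * a₀ * a₁ ^ 2 * a₂ + 6 * a₀ ^ 2 * a₂ ^ 2)
        + X ^ 5 * E (4 * a₁ ^ 3 * a₂ + 12 * a₀ * a₁ * a₂ ^ 2)
        + X ^ 6 * E (6 * a₁ ^ 2 * a₂ ^ 2 + 4 * a₀ * a₂ ^ 3)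
        + X ^ 7 * E (4 * a₁ * a₂ ^ 3) + X ^ 8 * E (a₂ ^ 4) := by
    simp only [map_add, map_mul, map_pow, map_ofNat]
    ring
  rw [h_pow]
  simp_rw [map_add (dissectionPart p 4)]
  simp (disch := decide) only [h_part]
  simp

lemma expand_eq_pow_of_zmod [Fact p.Prime] (hp : p ≠ 0) (f : (ZMod p)⟦X⟧) :
    expand p hp f = f ^ p := by
  have h := MvPowerSeries.map_frobenius_expand p hp (f := f)
  rw [ZMod.frobenius_zmod] at h
  rw [← h, MvPowerSeries.map_id]
  rfl

end Dissection

local notation "expand₅" => PowerSeries.expand 5 (NeZero.ne 5)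

section PentagonalSeries

variable (R : Type*) [CommRing R]

/-- The subsum of `pentagonalSeries R = ∑ a, (-1) ^ a X ^ (a (3 a - 1) / 2)` over the integers
`a ≡ c` modulo `p`, used to identify the components of its `p`-dissection. -/
noncomputable def pentagonalSeriesMod (p : ℕ) (c : ZMod p) : R⟦X⟧ :=
  mk (Function.extend pentagonal (fun a : ℤ => if (a : ZMod p) = c then (a.negOnePow : R) else 0) 0)

variable {R} {p : ℕ}

@[simp]
lemma coeff_pentagonal_pentagonalSeriesMod (c : ZMod p) (a : ℤ) :
    coeff (pentagonal a) (pentagonalSeriesMod R p c) =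
      if (a : ZMod p) = c then (a.negOnePow : R) else 0 := by
  rw [pentagonalSeriesMod, coeff_mk, pentagonal_injective.extend_apply]

lemma coeff_pentagonalSeriesMod_eq_zero {c : ZMod p} {n : ℕ}
    (h : ∀ a : ℤ, pentagonal a = n → (a : ZMod p) ≠ c) :
    coeff n (pentagonalSeriesMod R p c) = 0 := by
  by_cases hn : ∃ a, pentagonal a = n
  · obtain ⟨a, rfl⟩ := hn
    rw [coeff_pentagonal_pentagonalSeriesMod, if_neg (h a rfl)]
  · rw [pentagonalSeriesMod, coeff_mk, Function.extend_apply' _ _ _ hn, Pi.zero_apply]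

lemma coeff_pentagonalSeriesMod_eq_zero_of_two_mul_ne {c : ZMod p} {n : ℕ}
    (h : 2 * (n : ZMod p) ≠ c * (3 * c - 1)) : coeff n (pentagonalSeriesMod R p c) = 0 := by
  refine coeff_pentagonalSeriesMod_eq_zero ?_
  rintro a rfl rfl
  exact h (mod_cast congrArg (Int.cast : ℤ → ZMod p) (two_mul_natCast_pentagonal a))

variable (R p) in
lemma sum_pentagonalSeriesMod [NeZero p] :
    ∑ c, pentagonalSeriesMod R p c = pentagonalSeries R := by
  ext n
  rw [map_sum]
  by_cases hn : n ∈ Set.range pentagonal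
  · obtain ⟨a, rfl⟩ := hn
    simp
  · rw [coeff_pentagonalSeries_eq_zero R hn]
    exact sum_eq_zero fun c _ => coeff_pentagonalSeriesMod_eq_zero fun a ha => absurd ⟨a, ha⟩ hn

lemma pentagonal_one_sub_five_mul (a : ℤ) : pentagonal (1 - 5 * a) = 25 * pentagonal a + 1 := by
  have h := two_mul_natCast_pentagonal (1 - 5 * a)
  have h' := two_mul_natCast_pentagonal a
  zify
  linarith

lemma exists_eq_one_sub_five_mul {a : ℤ} (ha : (a : ZMod 5) = 1) : ∃ b, a = 1 - 5 * b := by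
  obtain ⟨b, hb⟩ := (ZMod.intCast_eq_intCast_iff_dvd_sub a 1 5).1 (mod_cast ha)
  exact ⟨b, by lia⟩

lemma cast_negOnePow_one_sub_five_mul (a : ℤ) :
    (((1 - 5 * a).negOnePow : ℤ) : R) = -((a.negOnePow : ℤ) : R) := by
  rw [show 1 - 5 * a = 2 * (-3 * a) + (a + 1) by ring, Int.negOnePow_add, Int.negOnePow_two_mul,
    one_mul, Int.negOnePow_succ]
  simp

variable (R) in
lemma pentagonalSeriesMod_five_one :
    pentagonalSeriesMod R 5 1 =
      -(X * expand₅ (expand₅ (pentagonalSeries R))) := by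
  rw [← expand_mul]
  ext n
  rw [map_neg]
  by_cases hn : ∃ a, n = 25 * pentagonal a + 1
  · obtain ⟨a, rfl⟩ := hn
    rw [coeff_succ_X_mul, coeff_expand_mul, coeff_pentagonalSeries_pentagonal,
      ← pentagonal_one_sub_five_mul, coeff_pentagonal_pentagonalSeriesMod,
      cast_negOnePow_one_sub_five_mul, if_pos]
    simp [show (5 : ZMod 5) = 0 from rfl]
  · have h_lhs : coeff n (pentagonalSeriesMod R 5 1) = 0 := by
      refine coeff_pentagonalSeriesMod_eq_zero fun a ha hmod => hn ?_
      obtain ⟨b, rfl⟩ := exists_eq_one_sub_five_mul hmod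
      exact ⟨b, by rw [← ha, pentagonal_one_sub_five_mul]⟩
    rw [h_lhs, zero_eq_neg]
    obtain _ | k := n
    · simp
    rw [coeff_succ_X_mul, coeff_expand]
    split_ifs with hk
    · obtain ⟨t, rfl⟩ := hk
      rw [Nat.mul_div_cancel_left t (by norm_num)]
      exact coeff_pentagonalSeries_eq_zero R fun ⟨a, ha⟩ => hn ⟨a, by rw [ha]⟩
    · rfl

/-- The pairs of pentagonal numbers with indices `a` and `b ≡ 2 * a - 1` modulo `5`, encoded as
`x = (a, t)` with `b = 2 * a - 1 + 5 * t`. -/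
noncomputable def pentagonalPair (x : ℤ × ℤ) : ℕ × ℕ :=
  (pentagonal x.1, pentagonal (2 * x.1 - 1 + 5 * x.2))

lemma pentagonalPair_injective : Function.Injective pentagonalPair := by
  rintro ⟨a, t⟩ ⟨b, u⟩ h
  simp only [pentagonalPair, Prod.mk.injEq, pentagonal_inj] at h ⊢
  lia

lemma pentagonal_add_pentagonal_reflect (a t : ℤ) :
    pentagonal (1 - 4 * t - a) + pentagonal (2 * (1 - 4 * t - a) - 1 + 5 * t) =
      pentagonal a + pentagonal (2 * a - 1 + 5 * t) := by
  zify
  linarith [two_mul_natCast_pentagonal (1 - 4 * t - a), two_mul_natCast_pentagonal a,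
    two_mul_natCast_pentagonal (2 * (1 - 4 * t - a) - 1 + 5 * t),
    two_mul_natCast_pentagonal (2 * a - 1 + 5 * t)]

lemma cast_negOnePow_reflect (a t : ℤ) :
    ((((1 - 4 * t - a) + (2 * (1 - 4 * t - a) - 1 + 5 * t)).negOnePow : ℤ) : R) =
      -(((a + (2 * a - 1 + 5 * t)).negOnePow : ℤ) : R) := by
  rw [show (1 - 4 * t - a) + (2 * (1 - 4 * t - a) - 1 + 5 * t) =
    2 * (1 - 6 * t - 3 * a) + ((a + (2 * a - 1 + 5 * t)) + 1) by ring, Int.negOnePow_add,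
    Int.negOnePow_two_mul, one_mul, Int.negOnePow_succ]
  simp

lemma sum_coeff_pentagonal_mul_coeff_pentagonal (a b : ℤ) :
    ∑ c : ZMod 5, coeff (pentagonal a) (pentagonalSeriesMod R 5 c) *
      coeff (pentagonal b) (pentagonalSeriesMod R 5 (2 * c - 1)) =
    if (b : ZMod 5) = 2 * a - 1 then (((a + b).negOnePow : ℤ) : R) else 0 := by
  simp_rw [coeff_pentagonal_pentagonalSeriesMod, ite_mul, zero_mul]
  simp [Int.negOnePow_add]

lemma sum_coeff_mul_coeff_pentagonalSeriesMod_eq_zero {i j : ℕ}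
    (h : (i, j) ∉ Set.range pentagonalPair) :
    ∑ c : ZMod 5, coeff i (pentagonalSeriesMod R 5 c) *
      coeff j (pentagonalSeriesMod R 5 (2 * c - 1)) = 0 := by
  refine sum_eq_zero fun c _ => ?_
  by_contra h_ne
  obtain ⟨a, rfl, rfl⟩ : ∃ a : ℤ, pentagonal a = i ∧ (a : ZMod 5) = c := by
    by_contra! ha
    exact h_ne (by rw [coeff_pentagonalSeriesMod_eq_zero ha, zero_mul])
  obtain ⟨b, rfl, hb⟩ : ∃ b : ℤ, pentagonal b = j ∧ (b : ZMod 5) = 2 * a - 1 := by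
    by_contra! hb
    exact h_ne (by rw [coeff_pentagonalSeriesMod_eq_zero hb, mul_zero])
  obtain ⟨t, ht⟩ := (ZMod.intCast_eq_intCast_iff_dvd_sub (2 * a - 1) b 5).1 (by simp [hb])
  exact h ⟨(a, t), by rw [← sub_add_cancel b (2 * a - 1), ht, add_comm]; rfl⟩

variable (R) in
lemma sum_pentagonalSeriesMod_mul :
    ∑ c, pentagonalSeriesMod R 5 c * pentagonalSeriesMod R 5 (2 * c - 1) = 0 := by
  ext N
  simp only [map_sum, coeff_mul, map_zero]
  rw [sum_comm, ← sum_preimage _ _ pentagonalPair_injective.injOn _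
    fun _ _ h_range => sum_coeff_mul_coeff_pentagonalSeriesMod_eq_zero h_range]
  simp only [pentagonalPair, sum_coeff_pentagonal_mul_coeff_pentagonal]
  have h_mod (a t : ℤ) : ((2 * a - 1 + 5 * t : ℤ) : ZMod 5) = 2 * a - 1 := by
    simp [show (5 : ZMod 5) = 0 from rfl]
  -- For fixed `t` the reflection of `a` preserves the exponent and flips the sign; it has no fixed
  -- point because `1 - 4 * t` is odd.
  refine sum_involution (fun x _ => (1 - 4 * x.2 - x.1, x.2)) ?_ ?_ ?_ ?_
  · rintro ⟨a, t⟩ -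
    rw [if_pos (h_mod _ _), if_pos (h_mod _ _), cast_negOnePow_reflect, add_neg_cancel]
  · rintro ⟨a, t⟩ - - h
    simp only [Prod.mk.injEq] at h
    lia
  · rintro ⟨a, t⟩ h
    simp only [mem_preimage, pentagonalPair, HasAntidiagonal.mem_antidiagonal] at h ⊢
    rw [pentagonal_add_pentagonal_reflect, h]
  · simp

lemma coeff_pentagonalSeriesMod_five_eq_zero {c : ZMod 5} {r n : ℕ} (hr : r < 5)
    (hc : 2 * (r : ZMod 5) = c * (3 * c - 1)) (hn : n % 5 ≠ r) :
    coeff n (pentagonalSeriesMod R 5 c) = 0 := by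
  refine coeff_pentagonalSeriesMod_eq_zero_of_two_mul_ne fun h => hn ?_
  have h_eq : (n : ZMod 5) = r := by
    have h_cancel : ∀ x y : ZMod 5, 2 * x = 2 * y → x = y := by decide
    exact h_cancel _ _ (h.trans hc.symm)
  rw [(ZMod.natCast_eq_natCast_iff' n r 5).1 h_eq, Nat.mod_eq_of_lt hr]

variable (R) in
lemma exists_five_dissection_pentagonalSeries : ∃ a₀ a₂ : R⟦X⟧,
    pentagonalSeries R =
      expand₅ a₀ + X * expand₅ (-expand₅ (pentagonalSeries R)) + X ^ 2 * expand₅ a₂ ∧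
    a₀ * a₂ = -expand₅ (pentagonalSeries R) ^ 2 := by
  set θ := pentagonalSeriesMod R 5
  have h₀ : X ^ 0 * expand₅ (dissectionPart 5 0 (θ 0 + θ 2)) = θ 0 + θ 2 := by
    refine X_pow_mul_expand_dissectionPart_eq_self _ (by norm_num) fun n hn => ?_
    rw [map_add, coeff_pentagonalSeriesMod_five_eq_zero (r := 0) (by norm_num) (by decide) hn,
      coeff_pentagonalSeriesMod_five_eq_zero (r := 0) (by norm_num) (by decide) hn, add_zero]
  have h₁ : θ 1 = -(X * expand₅ (expand₅ (pentagonalSeries R))) :=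
    pentagonalSeriesMod_five_one R
  have h₂ : X ^ 2 * expand₅ (dissectionPart 5 2 (θ 3 + θ 4)) = θ 3 + θ 4 := by
    refine X_pow_mul_expand_dissectionPart_eq_self _ (by norm_num) fun n hn => ?_
    rw [map_add, coeff_pentagonalSeriesMod_five_eq_zero (r := 2) (by norm_num) (by decide) hn,
      coeff_pentagonalSeriesMod_five_eq_zero (r := 2) (by norm_num) (by decide) hn, add_zero]
  rw [pow_zero, one_mul] at h₀
  have h_sum : θ 0 + θ 1 + θ 2 + θ 3 + θ 4 = pentagonalSeries R := by
    rw [← sum_pentagonalSeriesMod R 5]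
    exact (Fin.sum_univ_five θ).symm
  have h_mul : (θ 0 + θ 2) * (θ 3 + θ 4) + θ 1 ^ 2 = 0 := by
    have h : θ 0 * θ 4 + θ 1 * θ 1 + θ 2 * θ 3 + θ 3 * θ 0 + θ 4 * θ 2 = 0 :=
      (Fin.sum_univ_five fun c : ZMod 5 => θ c * θ (2 * c - 1)).symm.trans
        (sum_pentagonalSeriesMod_mul R)
    linear_combination h
  refine ⟨dissectionPart 5 0 (θ 0 + θ 2), dissectionPart 5 2 (θ 3 + θ 4), ?_, ?_⟩
  · rw [h₀, h₂, map_neg]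
    linear_combination h₁ - h_sum
  · have h : X ^ 2 * expand₅ (dissectionPart 5 0 (θ 0 + θ 2) *
        dissectionPart 5 2 (θ 3 + θ 4) + expand₅ (pentagonalSeries R) ^ 2) = 0 := by
      rw [← h₀, ← h₂, h₁] at h_mul
      rw [map_add, map_mul, map_pow]
      linear_combination h_mul
    rw [eq_neg_iff_add_eq_zero, ← map_zero (dissectionPart 5 2), ← h,
      dissectionPart_X_pow_mul_expand _ (by norm_num) (by norm_num), if_pos rfl]

variable (R) in
lemma dissectionPart_pentagonalSeries_sq :
    dissectionPart 5 2 (pentagonalSeries R ^ 2) =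
      -expand₅ (pentagonalSeries R) ^ 2 := by
  obtain ⟨a₀, a₂, h_diss, h_mul⟩ := exists_five_dissection_pentagonalSeries R
  conv_lhs => rw [h_diss]
  rw [dissectionPart_trinomial_sq _ (by norm_num)]
  linear_combination 2 * h_mul

variable (R) in
lemma dissectionPart_pentagonalSeries_pow_four :
    dissectionPart 5 4 (pentagonalSeries R ^ 4) = -5 * expand₅ (pentagonalSeries R) ^ 4 := by
  obtain ⟨a₀, a₂, h_diss, h_mul⟩ := exists_five_dissection_pentagonalSeries R
  conv_lhs => rw [h_diss]
  rw [dissectionPart_trinomial_pow_four _ le_rfl]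
  linear_combination (6 * a₀ * a₂ + 6 * expand₅ (pentagonalSeries R) ^ 2) * h_mul

end PentagonalSeries

lemma mk_colouredPartitions_eq_sq_mul_expand (k : ℕ) :
    (mk fun n => (colouredPartitions (25 * k + 3) n : ZMod 5)) =
      pentagonalSeries (ZMod 5) ^ 2 * expand₅ (pentagonalSeries (ZMod 5) ^ 4 *
        expand₅ (mk fun n => (colouredPartitions (k + 1) n : ZMod 5))) := by
  have : Fact (Nat.Prime 5) := ⟨Nat.prime_five⟩
  have h := mk_colouredPartitions_mul_pentagonalSeries_pow (ZMod 5) (25 * k + 3)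
  have h' := mk_colouredPartitions_mul_pentagonalSeries_pow (ZMod 5) (k + 1)
  simp only [expand_eq_pow_of_zmod]
  set F := pentagonalSeries (ZMod 5)
  set H := mk fun n => (colouredPartitions (25 * k + 3) n : ZMod 5)
  set G := mk fun n => (colouredPartitions (k + 1) n : ZMod 5)
  calc
    H = H * (G * F ^ (k + 1)) ^ 25 := by rw [h', one_pow, mul_one]
    _ = (H * F ^ (25 * k + 3)) * (F ^ 2 * (F ^ 4 * G ^ 5) ^ 5) := by ring
    _ = F ^ 2 * (F ^ 4 * G ^ 5) ^ 5 := by rw [h, one_mul]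

theorem colouredPartitions_cong_mod5_25k3 (k n : ℕ) :
    5 ∣ colouredPartitions (25 * k + 3) (25 * n + 22) := by
  set F := pentagonalSeries (ZMod 5)
  set G : (ZMod 5)⟦X⟧ := mk fun n => (colouredPartitions (k + 1) n : ZMod 5)
  have h_part : dissectionPart 5 4 (dissectionPart 5 2
      (mk fun n => (colouredPartitions (25 * k + 3) n : ZMod 5))) = 0 := calc
    _ = dissectionPart 5 4 (-expand₅ F ^ 2 * (F ^ 4 * expand₅ G)) := by
      rw [mk_colouredPartitions_eq_sq_mul_expand, dissectionPart_mul_expand _ (by norm_num),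
        dissectionPart_pentagonalSeries_sq]
    _ = dissectionPart 5 4 (F ^ 4 * expand₅ (-F ^ 2 * G)) := by
      congr 1
      rw [map_mul, map_neg, map_pow]
      ring
    _ = -5 * expand₅ F ^ 4 * (-F ^ 2 * G) := by
      rw [dissectionPart_mul_expand _ (by norm_num), dissectionPart_pentagonalSeries_pow_four]
    _ = 0 := by
      have h_five : (5 : (ZMod 5)⟦X⟧) = 0 := by
        rw [← map_ofNat (C (R := ZMod 5)) 5, show (5 : ZMod 5) = 0 from rfl, map_zero]
      rw [h_five, neg_zero, zero_mul, zero_mul]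
  rw [← ZMod.natCast_eq_zero_iff]
  simpa [show 5 * (5 * n + 4) + 2 = 25 * n + 22 by ring] using congrArg (coeff n) h_part
end

section
/- For every non-negative integer k and every non-negative integer n, the number of (7k+1)-colour partitions of 7n+5 is divisible by 7; that is, p_{7k+1}(7n+5) ≡ 0 (mod 7). -/
/-!
Write `φ = ∏ₘ (1 - Xᵐ)`, so that `F_r = φ⁻ʳ` is the generating function of `r`-colour partitions.
For a prime `p` with `r + 6 = p s` we have `F_r = (F_s)ᵖ φ⁶`, and modulo `p` the factor `(F_s)ᵖ` is
a series in `Xᵖ`. By Jacobi's identity `φ³ = ∑ⱼ (-1)ʲ (2j + 1) X ^ (j(j + 1)/2)`, the coefficient of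
`Xᵐ` in `φ⁶ = φ³ φ³` is a sum of terms `± (2j + 1)(2k + 1)` with
`(2j + 1)² + (2k + 1)² = 2 (4m + 1)`. If `p ∣ 4m + 1` and `p ≡ 3 mod 4`, then `-1` is not a square
modulo `p`, so `p` divides `2j + 1` and `2k + 1`, and the coefficient vanishes modulo `p`.
The theorem is the case `p = 7`.

Jacobi's identity is read off from the finite triple product
`(1 + z⁻¹) ∏_{1 ≤ i ≤ n} (1 + z qⁱ) (1 + z⁻¹ qⁱ)`, whose derivative at `z = -1` is, up to sign, the
sum of the coefficients of `zʲ`, `j ≥ 0`, weighted by `(-1)ʲ (2j + 1)`. By the pentagonal number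
theorem `φ` is Mathlib's `pentagonalSeries`.
-/

open Finset PowerSeries

section FiniteTripleProduct

variable {A : Type*} [CommRing A] (q : A)

/-- The `q`-Pochhammer symbol `(q; q)ₙ = (1 - q)(1 - q²)⋯(1 - qⁿ)`. -/
def qPochhammer (n : ℕ) : A := ∏ i ∈ range n, (1 - q ^ (i + 1))

lemma qPochhammer_succ (n : ℕ) :
    qPochhammer q (n + 1) = qPochhammer q n * (1 - q ^ (n + 1)) :=
  prod_range_succ _ n

lemma qPochhammer_add_two (n : ℕ) : qPochhammer q (n + 2) =
    qPochhammer q n * ((1 - q ^ (n + 1)) * (1 - q ^ (n + 2))) := by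
  rw [qPochhammer_succ, qPochhammer_succ, mul_assoc]

lemma map_qPochhammer {B : Type*} [CommRing B] (f : A →+* B) (n : ℕ) :
    f (qPochhammer q n) = qPochhammer (f q) n := by
  simp [qPochhammer]

/-- The coefficient of `z ^ j`, `j ≥ 0`, in the finite Jacobi triple product
`(1 + z⁻¹) ∏_{1 ≤ i ≤ n} (1 + z q ^ i) (1 + z⁻¹ q ^ i)`. The coefficients of `z ^ j` and of
`z ^ (-1 - j)` agree, so the truncation `0 - 1 = 0` in the recursion gives the right value. -/
def tripleProductCoeff : ℕ → ℕ → A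
  | 0, j => if j = 0 then 1 else 0
  | n + 1, j => (1 + q ^ (2 * n + 2)) * tripleProductCoeff n j +
      q ^ (n + 1) * (tripleProductCoeff n (j - 1) + tripleProductCoeff n (j + 1))

lemma tripleProductCoeff_succ (n j : ℕ) : tripleProductCoeff q (n + 1) j =
    (1 + q ^ (2 * n + 2)) * tripleProductCoeff q n j +
      q ^ (n + 1) * (tripleProductCoeff q n (j - 1) + tripleProductCoeff q n (j + 1)) := by
  rw [tripleProductCoeff]

lemma tripleProductCoeff_eq_zero_of_lt {n j : ℕ} (h : n < j) : tripleProductCoeff q n j = 0 := by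
  induction n generalizing j with
  | zero => simp [tripleProductCoeff, h.ne']
  | succ n ih =>
    simp [tripleProductCoeff_succ, ih (show n < j by omega), ih (show n < j - 1 by omega),
      ih (show n < j + 1 by omega)]

lemma choose_two_pred_add (j : ℕ) : (j - 1 + 1).choose 2 + j = (j + 1).choose 2 := by
  cases j with
  | zero => rfl
  | succ j =>
    rw [add_tsub_cancel_right, Nat.choose_succ_succ' (j + 1) 1, Nat.choose_one_right, add_comm]

lemma tripleProductCoeff_self (n : ℕ) :
    tripleProductCoeff q n n = q ^ (n + 1).choose 2 := by
  induction n with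
  | zero => simp [tripleProductCoeff]
  | succ n ih =>
    rw [tripleProductCoeff_succ, tripleProductCoeff_eq_zero_of_lt q n.lt_succ_self,
      tripleProductCoeff_eq_zero_of_lt q (by omega : n < n + 1 + 1), add_tsub_cancel_right, ih,
      ← choose_two_pred_add (n + 1), add_tsub_cancel_right]
    ring

/-- The product formula `tripleProductCoeff q n j = q ^ (j (j + 1) / 2) (q; q)₂ₙ₊₁ / ((q; q)ₙ₋ⱼ
(q; q)ₙ₊ⱼ₊₁)` for all `j ≤ n`, cleared of denominators and with `d` in place of `n - j`. It is
a predicate of `n` because its proof is an induction on `n`. -/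
def TripleProductFormula (n : ℕ) : Prop :=
  ∀ ⦃j d : ℕ⦄, j + d = n → tripleProductCoeff q n j *
    (qPochhammer q d * qPochhammer q (n + j + 1)) =
      q ^ (j + 1).choose 2 * qPochhammer q (2 * n + 1)

namespace TripleProductFormula

variable {q} {n j d : ℕ}

lemma pred_term (formula : TripleProductFormula q n) (h : j + d = n) :
    tripleProductCoeff q n (j - 1) * (qPochhammer q (d + 1) * qPochhammer q (n + j + 2)) =
      q ^ (j - 1 + 1).choose 2 * qPochhammer q (2 * n + 1) *
        ((1 - q ^ (n + j + 1)) * (1 - q ^ (n + j + 2))) := by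
  rcases j with _ | j
  · obtain rfl : d = n := by omega
    rw [zero_tsub, ← formula h, qPochhammer_add_two, qPochhammer_succ q d]
    simp only [add_zero]
    ring
  · rw [add_tsub_cancel_right, ← formula (by omega : j + (d + 1) = n),
      qPochhammer_add_two q (n + (j + 1)), ← add_assoc n j 1]
    ring

lemma succ_term (formula : TripleProductFormula q n) (h : j + d = n) :
    tripleProductCoeff q n (j + 1) * (qPochhammer q (d + 1) * qPochhammer q (n + j + 2)) =
      q ^ (j + 1 + 1).choose 2 * qPochhammer q (2 * n + 1) *
        ((1 - q ^ d) * (1 - q ^ (d + 1))) := by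
  rcases d with _ | d
  · rw [tripleProductCoeff_eq_zero_of_lt q (by omega : n < j + 1)]
    simp
  · rw [← formula (by omega : j + 1 + d = n), qPochhammer_add_two q d, ← add_assoc n j 1]
    ring

end TripleProductFormula

theorem tripleProductFormula (n : ℕ) : TripleProductFormula q n := by
  induction n with
  | zero =>
    intro j d h
    obtain ⟨rfl, rfl⟩ : j = 0 ∧ d = 0 := by omega
    simp [tripleProductCoeff, qPochhammer]
  | succ n ih =>
    rintro j (_ | d) h
    · obtain rfl : j = n + 1 := h
      rw [tripleProductCoeff_self, two_mul]
      simp [qPochhammer]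
    obtain rfl : j + d = n := by omega
    have pred_term := ih.pred_term rfl
    have same_term := ih rfl
    have succ_term := ih.succ_term rfl
    rw [← choose_two_pred_add (j + 1), add_tsub_cancel_right] at succ_term
    rw [← choose_two_pred_add j] at *
    rw [tripleProductCoeff_succ, show j + d + 1 + j + 1 = j + d + j + 2 by ring,
      show 2 * (j + d + 1) + 1 = 2 * (j + d) + 1 + 2 by ring, qPochhammer_add_two q (_ + 1)]
    rw [qPochhammer_succ q d, qPochhammer_succ q (j + d + j + 1)] at *
    linear_combination (1 + q ^ (2 * (j + d) + 2)) *
      ((1 - q ^ (d + 1)) * (1 - q ^ (j + d + j + 2))) * same_term +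
      q ^ (j + d + 1) * (pred_term + succ_term)

-- Summation by parts: the weights `a j = (-1) ^ j * (2 * j + 1)` satisfy
-- `a (j - 1) + a (j + 1) = -2 * a j`.
lemma sum_neg_one_pow_mul_shift (f : ℕ → A) (M : ℕ) :
    ∑ j ∈ range M, (-1) ^ j * (2 * j + 1) * (f (j - 1) + f (j + 1)) =
      -2 * ∑ j ∈ range M, (-1) ^ j * (2 * j + 1) * f j -
        (-1) ^ M * ((2 * M - 1) * f M + (2 * M + 1) * f (M - 1)) := by
  induction M with
  | zero => simp
  | succ M ih =>
    rw [sum_range_succ, sum_range_succ, ih]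
    push_cast
    ring

lemma sum_neg_one_pow_mul_tripleProductCoeff {n M : ℕ} (h : n < M) :
    ∑ j ∈ range M, (-1) ^ j * (2 * j + 1) * tripleProductCoeff q n j = qPochhammer q n ^ 2 := by
  induction n with
  | zero => simp [tripleProductCoeff, qPochhammer, h.ne']
  | succ n ih =>
    have shift := sum_neg_one_pow_mul_shift (tripleProductCoeff q n) M
    rw [tripleProductCoeff_eq_zero_of_lt q (by omega : n < M),
      tripleProductCoeff_eq_zero_of_lt q (by omega : n < M - 1), ih (by omega)] at shift
    calc ∑ j ∈ range M, (-1) ^ j * (2 * j + 1) * tripleProductCoeff q (n + 1) j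
      _ = (1 + q ^ (2 * n + 2)) *
            ∑ j ∈ range M, (-1) ^ j * (2 * j + 1) * tripleProductCoeff q n j +
          q ^ (n + 1) * ∑ j ∈ range M, (-1) ^ j * (2 * j + 1) *
            (tripleProductCoeff q n (j - 1) + tripleProductCoeff q n (j + 1)) := by
        simp only [tripleProductCoeff_succ, mul_sum, ← sum_add_distrib]
        exact sum_congr rfl fun j _ ↦ by ring
      _ = qPochhammer q (n + 1) ^ 2 := by
        rw [shift, ih (by omega), qPochhammer_succ]
        ring

end FiniteTripleProduct

section Nilpotent

variable {A : Type*} [CommRing A] {q : A} {d : ℕ}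

lemma isUnit_qPochhammer (hq : IsNilpotent q) (n : ℕ) : IsUnit (qPochhammer q n) :=
  IsUnit.prod_iff.2 fun i _ ↦ (hq.pow_succ i).isUnit_one_sub

lemma qPochhammer_eq_of_le (hq : q ^ (d + 1) = 0) {n : ℕ} (h : d ≤ n) :
    qPochhammer q n = qPochhammer q d := by
  induction n, h using Nat.le_induction with
  | base => rfl
  | succ n h ih => rw [qPochhammer_succ, ih, pow_eq_zero_of_le (by omega) hq, sub_zero, mul_one]

lemma le_choose_two (j : ℕ) : j ≤ (j + 1).choose 2 := by
  rw [← choose_two_pred_add]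
  omega

-- At level `2 * d`, all Pochhammer symbols in the product formula have stabilised if `j ≤ d`, and
-- `q ^ (j + 1).choose 2 = 0` otherwise.
lemma qPochhammer_mul_tripleProductCoeff (hq : q ^ (d + 1) = 0) {j : ℕ} (hj : j ≤ 2 * d) :
    qPochhammer q d * tripleProductCoeff q (2 * d) j = q ^ (j + 1).choose 2 := by
  have hu := isUnit_qPochhammer ⟨_, hq⟩
  obtain ⟨e, he⟩ := Nat.exists_eq_add_of_le hj
  have closed_form := tripleProductFormula q (2 * d) he.symm
  rw [qPochhammer_eq_of_le hq (by omega : d ≤ 2 * d + j + 1),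
    qPochhammer_eq_of_le hq (by omega : d ≤ 2 * (2 * d) + 1)] at closed_form
  rcases le_or_gt d e with hde | hde
  · rw [qPochhammer_eq_of_le hq hde] at closed_form
    apply (hu d).mul_right_cancel
    linear_combination closed_form
  · have pow_eq_zero : q ^ (j + 1).choose 2 = 0 :=
      pow_eq_zero_of_le (by grind [le_choose_two j]) hq
    rw [pow_eq_zero, zero_mul, ((hu e).mul (hu d)).mul_left_eq_zero] at closed_form
    rw [closed_form, pow_eq_zero, mul_zero]

theorem qPochhammer_pow_three (hq : q ^ (d + 1) = 0) :
    qPochhammer q d ^ 3 = ∑ j ∈ range (d + 1), (-1) ^ j * (2 * j + 1) * q ^ (j + 1).choose 2 := by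
  calc qPochhammer q d ^ 3
    _ = ∑ j ∈ range (2 * d + 1),
          (-1) ^ j * (2 * j + 1) * (qPochhammer q d * tripleProductCoeff q (2 * d) j) := by
      have h := sum_neg_one_pow_mul_tripleProductCoeff q (2 * d).lt_succ_self
      rw [qPochhammer_eq_of_le hq (by omega : d ≤ 2 * d)] at h
      rw [pow_succ', ← h, mul_sum]
      exact sum_congr rfl fun j _ ↦ by ring
    _ = ∑ j ∈ range (2 * d + 1), (-1) ^ j * (2 * j + 1) * q ^ (j + 1).choose 2 :=
      sum_congr rfl fun j hj ↦ by
        rw [qPochhammer_mul_tripleProductCoeff hq (by grind)]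
    _ = ∑ j ∈ range (d + 1), (-1) ^ j * (2 * j + 1) * q ^ (j + 1).choose 2 := by
      refine (sum_subset (by grind) fun j _ hj ↦ ?_).symm
      rw [pow_eq_zero_of_le (by grind [le_choose_two j]) hq, mul_zero]

end Nilpotent

section Reduction

variable {R : Type*} [CommRing R]

variable (R) in
/-- The reduction `R⟦X⟧ → R⟦X⟧ / (X ^ d)`, in which `X` is nilpotent and the infinite product
`∏ (1 - X ^ m)` becomes finite. -/
noncomputable def modXPow (d : ℕ) : R⟦X⟧ →+* R⟦X⟧ ⧸ Ideal.span {(X : R⟦X⟧) ^ d} :=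
  Ideal.Quotient.mk _

lemma modXPow_eq_modXPow_iff {d : ℕ} {f g : R⟦X⟧} :
    modXPow R d f = modXPow R d g ↔ ∀ m < d, coeff m f = coeff m g := by
  simp [modXPow, Ideal.Quotient.eq, Ideal.mem_span_singleton, X_pow_dvd_iff, sub_eq_zero]

variable (R)

lemma modXPow_X_pow (d : ℕ) : modXPow R d X ^ d = 0 := by
  rw [← map_pow]
  exact Ideal.Quotient.mk_singleton_self _

lemma modXPow_pentagonalSeries (d : ℕ) :
    modXPow R (d + 1) (pentagonalSeries R) = qPochhammer (modXPow R (d + 1) X) d := by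
  have eventually_range (m : ℕ) := Filter.tendsto_finset_range.eventually
    (coeff_prod_one_sub_X_pow_eventually_eq R m)
  obtain ⟨N, hN, coeff_eq⟩ := ((Filter.eventually_ge_atTop d).and
    ((range (d + 1)).eventually_all.2 fun m _ ↦ eventually_range m)).exists
  rw [← qPochhammer_eq_of_le (modXPow_X_pow R (d + 1)) hN, ← map_qPochhammer,
    modXPow_eq_modXPow_iff]
  exact fun m hm ↦ (coeff_eq m (mem_range.2 hm)).symm

-- The range contains every `j` with `(j + 1).choose 2 = m`, since `j ≤ (j + 1).choose 2`.
theorem coeff_pentagonalSeries_pow_three (m : ℕ) : coeff m (pentagonalSeries R ^ 3) =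
    ∑ j ∈ range (m + 1) with (j + 1).choose 2 = m, ((-1) ^ j * (2 * j + 1) : R) := by
  have modXPow_eq : modXPow R (m + 1) (pentagonalSeries R ^ 3) = modXPow R (m + 1)
      (∑ j ∈ range (m + 1), C ((-1) ^ j * (2 * j + 1) : R) * X ^ (j + 1).choose 2) := by
    rw [map_pow, modXPow_pentagonalSeries, qPochhammer_pow_three (modXPow_X_pow R (m + 1))]
    simp [two_mul]
  rw [modXPow_eq_modXPow_iff.1 modXPow_eq m m.lt_succ_self, map_sum, sum_filter]
  refine sum_congr rfl fun j _ ↦ ?_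
  rw [coeff_C_mul, coeff_X_pow, mul_ite, mul_one, mul_zero]
  simp only [eq_comm]

end Reduction

section Counting

variable {ι : Type*} {w : ι → ℕ}

lemma smul_finsupp_injective (hw : ∀ i, w i ≠ 0) :
    Function.Injective fun f : ι →₀ ℕ ↦ w • f := fun f g hfg ↦ by
  ext i
  exact Nat.eq_of_mul_eq_mul_left (Nat.pos_of_ne_zero (hw i)) (DFunLike.congr_fun hfg i)

lemma support_subset_of_sum_le {s : Finset ι} {n : ℕ} (hs : ∀ i, w i ≤ n → i ∈ s) {f : ι →₀ ℕ}
    (hf : (f.sum fun i m ↦ w i * m) ≤ n) : f.support ⊆ s := fun i hi ↦ hs i <|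
  calc w i
    _ ≤ w i * f i :=
      Nat.le_mul_of_pos_right _ (Nat.pos_of_ne_zero (Finsupp.mem_support_iff.1 hi))
    _ ≤ f.sum fun i m ↦ w i * m :=
      single_le_sum (f := fun i ↦ w i * f i) (fun _ _ ↦ Nat.zero_le _) hi
    _ ≤ n := hf

lemma image_smul_finsupp_sum_eq [DecidableEq ι] {s : Finset ι} {n : ℕ}
    (hs : ∀ i, w i ≤ n → i ∈ s) :
    (fun f ↦ w • f) '' {f : ι →₀ ℕ | (f.sum fun i m ↦ w i * m) = n} =
      ↑{l ∈ s.finsuppAntidiag n | ∀ i ∈ s, w i ∣ l i} := by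
  ext l
  simp only [Set.mem_image, Set.mem_ofPred_eq, coe_filter, mem_finsuppAntidiag]
  constructor
  · rintro ⟨f, hf, rfl⟩
    have f_support := support_subset_of_sum_le hs hf.le
    refine ⟨⟨?_, fun i hi ↦ f_support ?_⟩, fun i _ ↦ ⟨f i, rfl⟩⟩
    · rw [← hf, Finsupp.sum_of_support_subset f f_support _ (by simp)]
      rfl
    · rw [Finsupp.mem_support_iff] at hi ⊢
      exact right_ne_zero_of_mul hi
  · rintro ⟨⟨l_sum, l_support⟩, l_dvd⟩
    have l_eq_zero (i : ι) (hi : i ∉ s) : l i = 0 :=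
      Finsupp.notMem_support_iff.1 (mt (@l_support i) hi)
    let f : ι →₀ ℕ := Finsupp.onFinset s (fun i ↦ l i / w i) fun i hi ↦ by
      contrapose! hi
      rw [l_eq_zero i hi, Nat.zero_div]
    have smul_f : w • f = l := by
      ext i
      by_cases hi : i ∈ s
      · exact Nat.mul_div_cancel' (l_dvd i hi)
      · rw [l_eq_zero i hi]
        simp [f, l_eq_zero i hi]
    refine ⟨f, ?_, smul_f⟩
    rw [Finsupp.sum_of_support_subset f Finsupp.support_onFinset_subset _ (by simp), ← l_sum,
      ← smul_f]
    rfl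

lemma natCast_card_finsupp_sum_eq (R : Type*) [CommRing R] (hw : ∀ i, w i ≠ 0) {s : Finset ι}
    {n : ℕ} (hs : ∀ i, w i ≤ n → i ∈ s) :
    (Nat.card {f : ι →₀ ℕ // (f.sum fun i m ↦ w i * m) = n} : R) =
      coeff n (∏ i ∈ s, expand (w i) (hw i) (mk 1 : R⟦X⟧)) := by
  classical
  rw [coeff_prod]
  simp only [coeff_expand, coeff_mk, Pi.one_apply, prod_boole, sum_boole]
  rw [← Set.ncard_coe_finset, ← image_smul_finsupp_sum_eq hs,
    Set.ncard_image_of_injective _ (smul_finsupp_injective hw)]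
  rfl

end Counting

section GeneratingFunction

variable {R : Type*} [CommRing R]

lemma expand_mk_one_mul_one_sub_X_pow (d : ℕ) (hd : d ≠ 0) :
    expand d hd (mk 1 : R⟦X⟧) * (1 - X ^ d) = 1 := by
  simpa using congrArg (expand d hd) (mk_one_mul_one_sub_eq_one R)

variable (R)

/-- The generating function `∑ₙ p_r(n) Xⁿ` of the numbers of `r`-colour partitions, with
coefficients in `R`. -/
noncomputable def colouredPartitionSeries (r : ℕ) : R⟦X⟧ :=
  PowerSeries.mk fun n ↦ (colouredPartitions r n : R)

theorem colouredPartitionSeries_mul_pentagonalSeries_pow (r : ℕ) :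
    colouredPartitionSeries R r * pentagonalSeries R ^ r = 1 := by
  refine PowerSeries.ext fun d ↦ modXPow_eq_modXPow_iff.1 ?_ d d.lt_succ_self
  let s : Finset (ℕ+ × Fin r) := (range d).map Equiv.pnatEquivNat.symm.toEmbedding ×ˢ univ
  have mem_s {m : ℕ} (hm : m < d + 1) (x : ℕ+ × Fin r) (hx : (x.1 : ℕ) ≤ m) : x ∈ s := by
    have natPred_lt : x.1.natPred < d := by
      have := x.1.natPred_add_one
      omega
    simpa [s, mem_map_equiv] using natPred_lt
  have modXPow_series : modXPow R (d + 1) (colouredPartitionSeries R r) =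
      modXPow R (d + 1) (∏ x ∈ s, expand x.1 x.1.ne_zero (mk 1)) :=
    modXPow_eq_modXPow_iff.2 fun m hm ↦ (coeff_mk m _).trans
      (natCast_card_finsupp_sum_eq R (fun x ↦ x.1.ne_zero) (mem_s hm))
  have qPochhammer_pow : qPochhammer (X : R⟦X⟧) d ^ r = ∏ x ∈ s, (1 - X ^ (x.1 : ℕ)) := by
    simp [qPochhammer, s, prod_product, prod_pow]
  rw [map_mul, map_pow, modXPow_series, modXPow_pentagonalSeries, ← map_qPochhammer, ← map_pow,
    ← map_mul, qPochhammer_pow, ← prod_mul_distrib]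
  simp only [expand_mk_one_mul_one_sub_X_pow, prod_const_one]

lemma colouredPartitionSeries_eq_pow_mul {r a m s : ℕ} (h : r + a = m * s) :
    colouredPartitionSeries R r =
      colouredPartitionSeries R s ^ m * pentagonalSeries R ^ a := by
  have mul_r := colouredPartitionSeries_mul_pentagonalSeries_pow R r
  have mul_s : colouredPartitionSeries R s ^ m * pentagonalSeries R ^ (r + a) = 1 := by
    rw [h, mul_comm m, pow_mul, ← mul_pow, colouredPartitionSeries_mul_pentagonalSeries_pow,
      one_pow]
  linear_combination (colouredPartitionSeries R s ^ m * pentagonalSeries R ^ a) * mul_r -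
    colouredPartitionSeries R r * mul_s

end GeneratingFunction

section Congruence

lemma eight_mul_choose_two_add_one (j : ℕ) : 8 * (j + 1).choose 2 + 1 = (2 * j + 1) ^ 2 := by
  induction j with
  | zero => rfl
  | succ j ih =>
    rw [← choose_two_pred_add (j + 1), add_tsub_cancel_right]
    linarith

lemma exists_sq_eq_of_coeff_pentagonalSeries_pow_three_ne_zero {R : Type*} [CommRing R] {m : ℕ}
    (h : coeff m (pentagonalSeries R ^ 3) ≠ 0) : ∃ x : R, x ≠ 0 ∧ x ^ 2 = 8 * m + 1 := by
  rw [coeff_pentagonalSeries_pow_three] at h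
  obtain ⟨j, hj, term_ne_zero⟩ := exists_ne_zero_of_sum_ne_zero h
  refine ⟨2 * j + 1, right_ne_zero_of_mul term_ne_zero, ?_⟩
  rw [← (mem_filter.1 hj).2]
  exact_mod_cast congrArg (Nat.cast (R := R)) (eight_mul_choose_two_add_one j).symm

variable {p : ℕ} [Fact p.Prime]

lemma coeff_pow_eq_zero_of_not_dvd {R : Type*} [CommRing R] [CharP R p] (f : R⟦X⟧) {m : ℕ}
    (hm : ¬ p ∣ m) : coeff m (f ^ p) = 0 := by
  have hp : p ≠ 0 := NeZero.ne p
  rw [show f ^ p = map (frobenius R p) (expand p hp f) from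
    (MvPowerSeries.map_frobenius_expand p hp).symm, coeff_map, coeff_expand_of_not_dvd p hp f hm,
    map_zero]

lemma coeff_pentagonalSeries_pow_six_eq_zero (hp : p % 4 = 3) {m : ℕ} (hm : p ∣ 4 * m + 1) :
    coeff m (pentagonalSeries (ZMod p) ^ 6) = 0 := by
  rw [show 6 = 3 + 3 from rfl, pow_add, coeff_mul]
  refine sum_eq_zero fun ⟨a, b⟩ hab ↦ ?_
  obtain rfl : a + b = m := HasAntidiagonal.mem_antidiagonal.1 hab
  by_contra h
  obtain ⟨x, -, hx⟩ :=
    exists_sq_eq_of_coeff_pentagonalSeries_pow_three_ne_zero (left_ne_zero_of_mul h)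
  obtain ⟨y, y_ne_zero, hy⟩ :=
    exists_sq_eq_of_coeff_pentagonalSeries_pow_three_ne_zero (right_ne_zero_of_mul h)
  have four_mul_add_one : (4 * (a + b) + 1 : ZMod p) = 0 := by
    exact_mod_cast (ZMod.natCast_eq_zero_iff _ p).2 hm
  have sq_eq_neg_sq : x ^ 2 = -y ^ 2 := by
    linear_combination hx + hy + 2 * four_mul_add_one
  exact ZMod.mod_four_ne_three_of_sq_eq_neg_sq' y_ne_zero sq_eq_neg_sq hp

theorem colouredPartitions_cong_mod7_1_general (hp : p % 4 = 3) {r n : ℕ} (hr : p ∣ r + 6)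
    (hn : p ∣ 4 * n + 1) : p ∣ colouredPartitions r n := by
  obtain ⟨s, hs⟩ := hr
  suffices coeff n (colouredPartitionSeries (ZMod p) r) = 0 by
    rwa [colouredPartitionSeries, coeff_mk, ZMod.natCast_eq_zero_iff] at this
  rw [colouredPartitionSeries_eq_pow_mul (ZMod p) hs, coeff_mul]
  refine sum_eq_zero fun ⟨a, b⟩ hab ↦ ?_
  obtain rfl : a + b = n := HasAntidiagonal.mem_antidiagonal.1 hab
  by_cases ha : p ∣ a
  · have hb : p ∣ 4 * b + 1 := by
      rwa [mul_add, add_assoc, Nat.dvd_add_right (ha.mul_left 4)] at hn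
    rw [coeff_pentagonalSeries_pow_six_eq_zero hp hb, mul_zero]
  · rw [coeff_pow_eq_zero_of_not_dvd _ ha, zero_mul]

end Congruence

theorem colouredPartitions_cong_mod7_1 (k n : ℕ) :
    7 ∣ colouredPartitions (7 * k + 1) (7 * n + 5) := by
  have : Fact (Nat.Prime 7) := ⟨by norm_num⟩
  exact colouredPartitions_cong_mod7_1_general (by norm_num) (by omega) (by omega)
end
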